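/- Let (R₊, R₋) be a cutting of R. Then the exact refinement indicator and the first-order refinement indicator satisfy the identity ΔJ = (λ² / 8) · (p / (p₊ · p₋)). -/

import Mathlib

/-!
By the parallel axis identity
`∑ i ∈ s, (d i - c) ^ 2 = ∑ i ∈ s, (d i - μ) ^ 2 + |s| (μ - c) ^ 2`, where `μ` is the mean over `s`,
the deviations within the two parts cancel in the exact indicator and leave
`ΔJ = (p₊ x ^ 2 + p₋ y ^ 2) / 2` with `x = c₊ - m` and `y = c₋ - m`. The deviations from the
overall mean balance, `p₊ x + p₋ y = 0`, so `λ = p₋ y - p₊ x = -2 p₊ x`, and `y` can be eliminated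
from `ΔJ`.
-/

section RefinementIndicators

open Finset
open scoped BigOperators

variable {ι : Type*}

theorem sum_sub_const_eq_card_smul_expect_sub {M : Type*} [AddCommGroup M] [Module ℚ≥0 M]
    (s : Finset ι) (f : ι → M) (c : M) :
    ∑ i ∈ s, (f i - c) = #s • (𝔼 i ∈ s, f i - c) := by
  rw [sum_sub_distrib, sum_const, smul_sub, card_smul_expect]

theorem sum_sub_expect_eq_zero {M : Type*} [AddCommGroup M] [Module ℚ≥0 M]
    (s : Finset ι) (f : ι → M) :
    ∑ i ∈ s, (f i - 𝔼 j ∈ s, f j) = 0 := by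
  rw [sum_sub_const_eq_card_smul_expect_sub, sub_self, smul_zero]

theorem sum_sub_sq_eq_sum_sub_expect_sq_add {A : Type*} [CommRing A] [Module ℚ≥0 A]
    (s : Finset ι) (f : ι → A) (c : A) :
    ∑ i ∈ s, (f i - c) ^ 2 =
      ∑ i ∈ s, (f i - 𝔼 j ∈ s, f j) ^ 2 + #s * (𝔼 j ∈ s, f j - c) ^ 2 := by
  set μ := 𝔼 j ∈ s, f j with hμ
  have expand (i : ι) :
      (f i - c) ^ 2 = (f i - μ) ^ 2 + (2 * (μ - c) * (f i - μ) + (μ - c) ^ 2) := by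
    ring
  have cross_term : ∑ i ∈ s, 2 * (μ - c) * (f i - μ) = 0 := by
    rw [← mul_sum, hμ, sum_sub_expect_eq_zero, mul_zero]
  simp only [expand, sum_add_distrib, cross_term, zero_add, sum_const, nsmul_eq_mul]

theorem mul_sq_add_mul_sq_of_mul_add_mul_eq_zero {K : Type*} [Field K] {a b x y : K}
    (ha : a ≠ 0) (hb : b ≠ 0) (h : a * x + b * y = 0) :
    a * x ^ 2 + b * y ^ 2 = (a * x) ^ 2 * ((a + b) / (a * b)) := by
  have hby : b * y = -(a * x) := eq_neg_of_add_eq_zero_right h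
  calc
    a * x ^ 2 + b * y ^ 2 = (a * x) ^ 2 / a + (b * y) ^ 2 / b := by field_simp
    _ = (a * x) ^ 2 * ((a + b) / (a * b)) := by
      rw [hby]
      field_simp
      ring

variable [DecidableEq ι]

section FirstOrder

variable {M : Type*} [AddCommGroup M] [Module ℚ≥0 M]

/-- The first-order refinement indicator `λ` of the cutting `(R₊, R₋) = (s, t)` of `s ∪ t`,
the signed total deviation of `d` from its overall mean. -/
def firstOrderIndicator (d : ι → M) (s t : Finset ι) : M :=
  ∑ i ∈ s, (𝔼 j ∈ s ∪ t, d j - d i) - ∑ i ∈ t, (𝔼 j ∈ s ∪ t, d j - d i)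

theorem card_smul_expect_sub_expect_union_add_eq_zero (d : ι → M) {s t : Finset ι}
    (hst : Disjoint s t) :
    #s • (𝔼 i ∈ s, d i - 𝔼 i ∈ s ∪ t, d i) + #t • (𝔼 i ∈ t, d i - 𝔼 i ∈ s ∪ t, d i) = 0 := by
  rw [← sum_sub_const_eq_card_smul_expect_sub, ← sum_sub_const_eq_card_smul_expect_sub,
    ← sum_union hst, sum_sub_expect_eq_zero]

theorem firstOrderIndicator_eq_neg_two_smul (d : ι → M) {s t : Finset ι} (hst : Disjoint s t) :
    firstOrderIndicator d s t = -(2 • #s • (𝔼 i ∈ s, d i - 𝔼 i ∈ s ∪ t, d i)) := by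
  have sum_const_sub (u : Finset ι) (c : M) :
      ∑ i ∈ u, (c - d i) = -(#u • (𝔼 i ∈ u, d i - c)) := by
    rw [← sum_sub_const_eq_card_smul_expect_sub, ← sum_neg_distrib]
    simp only [neg_sub]
  have balance := eq_neg_of_add_eq_zero_right (card_smul_expect_sub_expect_union_add_eq_zero d hst)
  rw [firstOrderIndicator, sum_const_sub, sum_const_sub, balance, two_nsmul]
  abel

end FirstOrder

section Exact

variable {K : Type*} [Field K] [CharZero K]

/-- The exact refinement indicator `ΔJ` of the cutting `(R₊, R₋) = (s, t)` of `s ∪ t`: the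
decrease of the least-squares misfit when the overall mean of `d` is replaced by separate means on
`s` and `t`. -/
def exactIndicator (d : ι → K) (s t : Finset ι) : K :=
  (1 / 2) * ∑ i ∈ s ∪ t, (d i - 𝔼 j ∈ s ∪ t, d j) ^ 2 -
    (1 / 2) * (∑ i ∈ s, (d i - 𝔼 j ∈ s, d j) ^ 2 + ∑ i ∈ t, (d i - 𝔼 j ∈ t, d j) ^ 2)

theorem exactIndicator_eq_half_mul (d : ι → K) {s t : Finset ι} (hst : Disjoint s t) :
    exactIndicator d s t =
      (1 / 2) * (#s * (𝔼 i ∈ s, d i - 𝔼 i ∈ s ∪ t, d i) ^ 2 +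
        #t * (𝔼 i ∈ t, d i - 𝔼 i ∈ s ∪ t, d i) ^ 2) := by
  rw [exactIndicator, sum_union hst, sum_sub_sq_eq_sum_sub_expect_sq_add s,
    sum_sub_sq_eq_sum_sub_expect_sq_add t]
  ring

theorem exact_eq_first_order_identity_general (d : ι → K) {s t : Finset ι}
    (hs : s.Nonempty) (ht : t.Nonempty) (hst : Disjoint s t) :
    exactIndicator d s t = firstOrderIndicator d s t ^ 2 / 8 * (#(s ∪ t) / (#s * #t)) := by
  have hs_card : (#s : K) ≠ 0 := Nat.cast_ne_zero.mpr hs.card_ne_zero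
  have ht_card : (#t : K) ≠ 0 := Nat.cast_ne_zero.mpr ht.card_ne_zero
  have balance := card_smul_expect_sub_expect_union_add_eq_zero d hst
  simp only [nsmul_eq_mul] at balance
  rw [exactIndicator_eq_half_mul d hst,
    mul_sq_add_mul_sq_of_mul_add_mul_eq_zero hs_card ht_card balance,
    firstOrderIndicator_eq_neg_two_smul d hst, card_union_of_disjoint hst]
  simp only [nsmul_eq_mul]
  push_cast
  ring

end Exact

end RefinementIndicators

/-- Identity linking the exact refinement indicator ΔJ and the first-order
refinement indicator λ for a cutting (R₊, R₋) of a region R: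
ΔJ = (λ²/8) · (p/(p₊ p₋)). -/
theorem exact_eq_first_order_identity {ι : Type*} [DecidableEq ι]
    (R Rp Rm : Finset ι) (d : ι → ℝ)
    (hRp : Rp.Nonempty) (hRm : Rm.Nonempty)
    (hdisj : Disjoint Rp Rm) (hun : Rp ∪ Rm = R)
    (m cp cm ΔJ lam : ℝ)
    (hm : m = (∑ i ∈ R, d i) / R.card)
    (hcp : cp = (∑ i ∈ Rp, d i) / Rp.card)
    (hcm : cm = (∑ i ∈ Rm, d i) / Rm.card)
    (hJ : ΔJ = (1/2) * ∑ i ∈ R, (d i - m)^2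
          - (1/2) * ((∑ i ∈ Rp, (d i - cp)^2) + ∑ i ∈ Rm, (d i - cm)^2))
    (hlam : lam = (∑ i ∈ Rp, (m - d i)) - ∑ i ∈ Rm, (m - d i)) :
    ΔJ = lam^2 / 8 * ((R.card : ℝ) / ((Rp.card : ℝ) * (Rm.card : ℝ))) := by
  subst hun hm hcp hcm hJ hlam
  simpa only [exactIndicator, firstOrderIndicator, Finset.expect_eq_sum_div_card] using
    exact_eq_first_order_identity_general d hRp hRm hdisj
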